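/- Fix 0 < r < 1. Suppose H is a complex Hilbert space and T is an invertible bounded linear operator on H with ‖T‖ ≤ r⁻¹ and ‖T⁻¹‖ ≤ r⁻¹, and suppose the spectrum of T*T is a finite subset of the open interval (r², r⁻²). Then there exist a complex Hilbert space K, an operator J ∈ 𝒬𝔸_r[K], and a linear isometry V : H → K such that Tⁿ = V* Jⁿ V for every integer n. -/

import Mathlib

open ContinuousLinearMap

noncomputable section

universe u

/-- `P` is an orthogonal projection: self-adjoint and idempotent. -/
def IsOrthProj {H : Type*} [NormedAddCommGroup H] [InnerProductSpace ℂ H] [CompleteSpace H]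
    (P : H →L[ℂ] H) : Prop :=
  IsSelfAdjoint P ∧ P * P = P

/-- Membership in the dilation boundary `𝒬𝔸_r`: `J` is invertible and `J*J = r²P₊ + r⁻²P₋`
for orthogonal projections `P₊, P₋` summing to the identity. -/
def memQAscript (r : ℝ) {H : Type*} [NormedAddCommGroup H] [InnerProductSpace ℂ H]
    [CompleteSpace H] (J : H →L[ℂ] H) : Prop :=
  IsUnit J ∧ ∃ Pp Pm : H →L[ℂ] H, IsOrthProj Pp ∧ IsOrthProj Pm ∧ Pp + Pm = 1 ∧
    adjoint J * J = ((r : ℂ) ^ 2) • Pp + ((r : ℂ)⁻¹ ^ 2) • Pm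

/-!
The norm bounds give `r² ≤ T*T ≤ r⁻²`, so `T*T = r²(1 - Q) + r⁻²Q` with `0 ≤ Q ≤ 1`, and Halmos'
projection `P` with corner `Q` makes `X = r²(1 - P) + r⁻²P` a dilation of `T*T` to `H ⊕ H`. Because
`r² · r⁻² = 1`, the Schur complement of the corner `T*T` in `X` is `(T*T)⁻¹ = (T*⁻¹)* T*⁻¹`, so
`X = J*J` for a block upper triangular `J` with diagonal `(T, T*⁻¹)`. Triangularity makes `H ⊕ 0`
invariant under `J` and `J⁻¹`, hence every integer power of `J` compresses to the same power of `T`.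
-/

section Matrices

theorem matrix_pow_apply_self {R ι : Type*} [Semiring R] [Fintype ι] [DecidableEq ι]
    {M : Matrix ι ι R} {j : ι} (hM : ∀ i, i ≠ j → M i j = 0) (n : ℕ) :
    (M ^ n) j j = M j j ^ n := by
  induction n with
  | zero => simp
  | succ n ih =>
    rw [pow_succ, Matrix.mul_apply, Finset.sum_eq_single j (fun i _ hi => by rw [hM i hi, mul_zero])
      (fun h => absurd (Finset.mem_univ j) h), ih, pow_succ]

theorem star_fin_two {R : Type*} [Star R] (a b c d : R) :
    star !![a, b; c, d] = !![star a, star c; star b, star d] := by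
  ext i j
  fin_cases i <;> fin_cases j <;> rfl

variable {R : Type*} [Ring R]

/-- The invertible matrix `[[a, b], [0, d]]` with invertible diagonal entries. -/
def upperTriangularUnit (a d : Rˣ) (b : R) : (Matrix (Fin 2) (Fin 2) R)ˣ where
  val := !![(a : R), b; 0, (d : R)]
  inv := !![(↑a⁻¹ : R), -(↑a⁻¹ * b * ↑d⁻¹); 0, (↑d⁻¹ : R)]
  val_inv := by simp [Matrix.one_fin_two, mul_assoc]
  inv_val := by simp [Matrix.one_fin_two, mul_assoc]

theorem upperTriangularUnit_apply_zero_of_ne (a d : Rˣ) (b : R) :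
    ∀ i, i ≠ 0 → (upperTriangularUnit a d b : Matrix (Fin 2) (Fin 2) R) i 0 = 0
  | 0, h => absurd rfl h
  | 1, _ => rfl

theorem upperTriangularUnit_inv_apply_zero_of_ne (a d : Rˣ) (b : R) :
    ∀ i, i ≠ 0 → (↑(upperTriangularUnit a d b)⁻¹ : Matrix (Fin 2) (Fin 2) R) i 0 = 0
  | 0, h => absurd rfl h
  | 1, _ => rfl

theorem star_mul_self_upperTriangularUnit [StarRing R] (u : Rˣ) (c : R) :
    star (upperTriangularUnit u (star u⁻¹) (↑(star u⁻¹) * c) : Matrix (Fin 2) (Fin 2) R) *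
        upperTriangularUnit u (star u⁻¹) (↑(star u⁻¹) * c) =
      !![(↑(star u * u) : R), c; star c, star c * ↑(star u * u)⁻¹ * c + ↑(star u * u)⁻¹] := by
  have hc : star (u : R) * (star (↑u⁻¹ : R) * c) = c := by
    rw [← mul_assoc, ← star_mul, Units.inv_mul, star_one, one_mul]
  simp [upperTriangularUnit, star_fin_two, mul_assoc, hc]

end Matrices

section BlockOperators

variable {𝕜 E ι : Type*} [RCLike 𝕜] [NormedAddCommGroup E] [InnerProductSpace 𝕜 E] [Fintype ι]

variable (𝕜 E) in
/-- The isometric inclusion of `E` as the `i`-th summand of the Hilbert sum `E^ι`. -/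
def summandInclusion [DecidableEq ι] (i : ι) : E →ₗᵢ[𝕜] PiLp 2 fun _ : ι => E where
  toLinearMap := (WithLp.linearEquiv 2 𝕜 (ι → E)).symm.toLinearMap ∘ₗ
    LinearMap.single 𝕜 (fun _ => E) i
  norm_map' x := PiLp.norm_single 2 (fun _ : ι => E) i x

theorem summandInclusion_apply [DecidableEq ι] (i : ι) (x : E) :
    summandInclusion 𝕜 E i x = PiLp.single 2 (β := fun _ : ι => E) i x :=
  rfl

/-- The operator on the Hilbert sum `E^ι` given by a matrix of operators on `E`, acting on vectors
of `E^ι` regarded as columns. -/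
def blockOperator (M : Matrix ι ι (E →L[𝕜] E)) :
    (PiLp 2 fun _ : ι => E) →L[𝕜] PiLp 2 fun _ : ι => E :=
  (PiLp.continuousLinearEquiv 2 𝕜 fun _ : ι => E).symm.toContinuousLinearMap ∘L
    ContinuousLinearMap.pi fun i => ∑ j, M i j ∘L PiLp.proj 2 (fun _ : ι => E) j

theorem blockOperator_apply (M : Matrix ι ι (E →L[𝕜] E)) (x : PiLp 2 fun _ : ι => E) (i : ι) :
    blockOperator M x i = ∑ j, M i j (x j) := by
  simp [blockOperator]

variable [CompleteSpace E]

theorem blockOperator_star (M : Matrix ι ι (E →L[𝕜] E)) :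
    blockOperator (star M) = star (blockOperator M) := by
  rw [star_eq_adjoint, eq_adjoint_iff]
  intro x y
  simp only [PiLp.inner_apply, blockOperator_apply, Matrix.star_apply, star_eq_adjoint, sum_inner,
    inner_sum, adjoint_inner_left]
  exact Finset.sum_comm

variable [DecidableEq ι]

variable (𝕜 E ι) in
/-- The representation of the matrix algebra `M_ι(B(E))` on the Hilbert sum `E^ι`. -/
def blockOperatorHom :
    Matrix ι ι (E →L[𝕜] E) →⋆ₐ[𝕜] ((PiLp 2 fun _ : ι => E) →L[𝕜] PiLp 2 fun _ : ι => E) where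
  toFun := blockOperator
  map_one' := by ext x i; simp [blockOperator_apply, Matrix.one_apply, DFunLike.ite_apply]
  map_mul' M N := by
    ext x i
    simp only [blockOperator_apply, mul_apply_eq_comp, Matrix.mul_apply, sum_apply, map_sum]
    exact Finset.sum_comm
  map_zero' := by ext x i; simp [blockOperator_apply]
  map_add' M N := by ext x i; simp [blockOperator_apply, Finset.sum_add_distrib]
  commutes' c := by
    ext x i
    simp [blockOperator_apply, Algebra.algebraMap_eq_smul_one, Matrix.one_apply,
      DFunLike.ite_apply]
  map_star' := blockOperator_star

theorem blockOperatorHom_apply (M : Matrix ι ι (E →L[𝕜] E)) :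
    blockOperatorHom 𝕜 E ι M = blockOperator M :=
  rfl

theorem adjoint_comp_blockOperatorHom_comp (M : Matrix ι ι (E →L[𝕜] E)) (i j : ι) :
    adjoint (summandInclusion 𝕜 E i).toContinuousLinearMap ∘L blockOperatorHom 𝕜 E ι M ∘L
      (summandInclusion 𝕜 E j).toContinuousLinearMap = M i j := by
  refine ContinuousLinearMap.ext fun x => ext_inner_right 𝕜 fun y => ?_
  rw [comp_apply, adjoint_inner_left]
  simp [blockOperatorHom_apply, blockOperator_apply, summandInclusion_apply, PiLp.inner_apply,
    apply_ite]

theorem adjoint_comp_blockOperatorHom_pow_comp {M : Matrix ι ι (E →L[𝕜] E)} {j : ι}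
    (hM : ∀ i, i ≠ j → M i j = 0) (n : ℕ) :
    adjoint (summandInclusion 𝕜 E j).toContinuousLinearMap ∘L (blockOperatorHom 𝕜 E ι M ^ n) ∘L
      (summandInclusion 𝕜 E j).toContinuousLinearMap = M j j ^ n := by
  rw [← map_pow, adjoint_comp_blockOperatorHom_comp, matrix_pow_apply_self hM]

end BlockOperators

theorem exists_mem_Icc_eq_smul_add_smul {k M : Type*} [Field k] [LinearOrder k]
    [IsStrictOrderedRing k] [AddCommGroup M] [PartialOrder M] [IsOrderedAddMonoid M] [Module k M]
    [PosSMulMono k M] {α β : k} {e x : M} (hαβ : α < β) (hx : x ∈ Set.Icc (α • e) (β • e)) :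
    ∃ q ∈ Set.Icc 0 e, x = α • (e - q) + β • q := by
  have hδ : 0 < β - α := sub_pos.2 hαβ
  have hδ_inv : (β - α)⁻¹ * (β - α) = 1 := inv_mul_cancel₀ hδ.ne'
  refine ⟨(β - α)⁻¹ • (x - α • e), ⟨smul_nonneg (inv_nonneg.2 hδ.le) (sub_nonneg.2 hx.1), ?_⟩, ?_⟩
  · calc (β - α)⁻¹ • (x - α • e) ≤ (β - α)⁻¹ • (β • e - α • e) :=
          smul_le_smul_of_nonneg_left (sub_le_sub_right hx.2 _) (inv_nonneg.2 hδ.le)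
      _ = e := by rw [← sub_smul, smul_smul, hδ_inv, one_smul]
  · match_scalars
    · linear_combination (-1 : k) * hδ_inv
    · linear_combination α * hδ_inv

theorem schurComplement_eq {k R : Type*} [CommRing k] [Ring R] [Algebra k R] {x : Rˣ} {α β : k}
    {q s : R} (hαβ : α * β = 1) (hx : (x : R) = α • (1 - q) + β • q) (hqs : Commute q s)
    (hs : s * s = q * (1 - q)) :
    (β - α) • s * ↑x⁻¹ * ((β - α) • s) + ↑x⁻¹ = α • q + β • (1 - q) := by
  have hsx : Commute s ↑x⁻¹ := by
    refine Commute.units_inv_right ?_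
    rw [hx]
    exact (((Commute.one_right s).sub_right hqs.symm).smul_right α).add_right
      (hqs.symm.smul_right β)
  have hprod : (x : R) * (α • q + β • (1 - q)) = ((β - α) * (β - α)) • (s * s) + 1 := by
    rw [hx, hs]
    simp only [mul_add, add_mul, mul_sub, sub_mul, smul_mul_assoc, mul_smul_comm, mul_one, one_mul]
    match_scalars
    · ring
    · ring
    · linear_combination hαβ
  calc (β - α) • s * ↑x⁻¹ * ((β - α) • s) + ↑x⁻¹
      = ↑x⁻¹ * (((β - α) * (β - α)) • (s * s) + 1) := by
        rw [smul_mul_assoc, hsx.eq, smul_mul_smul_comm, mul_assoc, mul_add, mul_one,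
          mul_smul_comm]
    _ = α • q + β • (1 - q) := by rw [← hprod, Units.inv_mul_cancel_left]

section CStarAlgebra

variable {A : Type*} [CStarAlgebra A] [PartialOrder A] [StarOrderedRing A]

theorem star_mul_self_le_sq_smul_one {a : A} {c : ℝ} (ha : ‖a‖ ≤ c) :
    star a * a ≤ c ^ 2 • (1 : A) := by
  rw [← Algebra.algebraMap_eq_smul_one]
  exact CStarAlgebra.star_mul_le_algebraMap_norm_sq.trans
    (algebraMap_mono A (pow_le_pow_left₀ (norm_nonneg a) ha 2))

theorem sq_smul_one_le_star_mul_self {u : Aˣ} {m : ℝ} (hm : 0 < m) (hu : ‖(↑u⁻¹ : A)‖ ≤ m⁻¹) :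
    m ^ 2 • (1 : A) ≤ star (u : A) * u :=
  calc m ^ 2 • (1 : A)
      = m ^ 2 • (star (u : A) * (star (↑u⁻¹ : A) * ↑u⁻¹) * u) := by
        rw [← mul_assoc, ← star_mul, mul_assoc, Units.inv_mul, star_one, mul_one]
    _ ≤ m ^ 2 • (star (u : A) * (m⁻¹ ^ 2 • 1) * u) :=
        smul_le_smul_of_nonneg_left
          (star_left_conjugate_le_conjugate (star_mul_self_le_sq_smul_one hu) _) (sq_nonneg m)
    _ = star (u : A) * u := by
        rw [mul_smul_comm, mul_one, smul_mul_assoc, smul_smul, ← mul_pow, mul_inv_cancel₀ hm.ne',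
          one_pow, one_smul]

/-- The off-diagonal entry of Halmos' projection dilating a positive contraction `q`. -/
def halmosDefect (q : A) : A :=
  CFC.sqrt (q * (1 - q))

theorem isSelfAdjoint_halmosDefect (q : A) : IsSelfAdjoint (halmosDefect q) :=
  (CFC.sqrt_nonneg _).isSelfAdjoint

theorem commute_halmosDefect (q : A) : Commute q (halmosDefect q) :=
  (((Commute.refl q).mul_left ((Commute.one_left q).sub_left (Commute.refl q))).cfcₙ_nnreal _).symm

theorem halmosDefect_mul_self {q : A} (hq : q ∈ Set.Icc 0 1) :
    halmosDefect q * halmosDefect q = q * (1 - q) :=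
  CFC.sqrt_mul_sqrt_self _ <| Commute.mul_nonneg hq.1 (sub_nonneg.2 hq.2) <|
    (Commute.one_right q).sub_right (Commute.refl q)

/-- Halmos' dilation of a positive contraction `q` to a projection with upper left corner `q`. -/
def halmosProjection (q : A) : Matrix (Fin 2) (Fin 2) A :=
  !![q, halmosDefect q; halmosDefect q, 1 - q]

theorem isStarProjection_halmosProjection {q : A} (hq : q ∈ Set.Icc 0 1) :
    IsStarProjection (halmosProjection q) where
  isIdempotentElem := by
    have hcomm : q * halmosDefect q = halmosDefect q * q := (commute_halmosDefect q).eq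
    have h₁₁ : q * q + q * (1 - q) = q := by noncomm_ring
    have h₁₂ : q * halmosDefect q + halmosDefect q * (1 - q) = halmosDefect q := by
      rw [hcomm]; noncomm_ring
    have h₂₁ : halmosDefect q * q + (1 - q) * halmosDefect q = halmosDefect q := by
      rw [← hcomm]; noncomm_ring
    have h₂₂ : q * (1 - q) + (1 - q) * (1 - q) = 1 - q := by noncomm_ring
    rw [IsIdempotentElem, halmosProjection, Matrix.mul_fin_two, halmosDefect_mul_self hq, h₁₁, h₁₂,
      h₂₁, h₂₂]
  isSelfAdjoint := by
    rw [IsSelfAdjoint, halmosProjection, star_fin_two, (isSelfAdjoint_halmosDefect q).star_eq,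
      star_sub, star_one, hq.1.isSelfAdjoint.star_eq]

theorem exists_star_mul_self_upperTriangularUnit_eq {u : Aˣ} {α β : ℝ} (hlt : α < β)
    (hαβ : α * β = 1) (hu : star (u : A) * u ∈ Set.Icc (α • (1 : A)) (β • (1 : A))) :
    ∃ (c : A) (p : Matrix (Fin 2) (Fin 2) A), IsStarProjection p ∧
      star (upperTriangularUnit u (star u⁻¹) c : Matrix (Fin 2) (Fin 2) A) *
        upperTriangularUnit u (star u⁻¹) c = α • (1 - p) + β • p := by
  obtain ⟨q, hq, huq⟩ := exists_mem_Icc_eq_smul_add_smul hlt hu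
  have hschur := schurComplement_eq (x := star u * u) hαβ (by simpa using huq)
    (commute_halmosDefect q) (halmosDefect_mul_self hq)
  refine ⟨_, halmosProjection q, isStarProjection_halmosProjection hq,
    (star_mul_self_upperTriangularUnit u ((β - α) • halmosDefect q)).trans ?_⟩
  have hentries : !![α • (1 - q) + β • q, (β - α) • halmosDefect q;
      (β - α) • halmosDefect q, α • q + β • (1 - q)] =
        α • (1 - halmosProjection q) + β • halmosProjection q := by
    ext i j
    fin_cases i <;> fin_cases j <;> simp [halmosProjection, sub_smul, neg_add_eq_sub]
  rw [star_smul, star_trivial (β - α), (isSelfAdjoint_halmosDefect q).star_eq, hschur,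
    Units.val_mul, Units.coe_star, huq, hentries]

end CStarAlgebra

section DilationBoundary

variable {H : Type*} [NormedAddCommGroup H] [InnerProductSpace ℂ H] [CompleteSpace H]

theorem isOrthProj_iff_isStarProjection {P : H →L[ℂ] H} : IsOrthProj P ↔ IsStarProjection P := by
  rw [isStarProjection_iff, and_comm]
  rfl

theorem memQAscript_of_isStarProjection {r : ℝ} {J P : H →L[ℂ] H} (hJ : IsUnit J)
    (hP : IsStarProjection P)
    (h : star J * J = (r : ℂ) ^ 2 • (1 - P) + (r : ℂ)⁻¹ ^ 2 • P) : memQAscript r J :=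
  ⟨hJ, 1 - P, P, isOrthProj_iff_isStarProjection.2 hP.one_sub,
    isOrthProj_iff_isStarProjection.2 hP, sub_add_cancel 1 P, h⟩

end DilationBoundary

theorem qa_dilation_finite_spectrum_general {H : Type u}
    [NormedAddCommGroup H] [InnerProductSpace ℂ H] [CompleteSpace H]
    (r : ℝ) (hr0 : 0 < r) (hr1 : r < 1)
    (T T' : H →L[ℂ] H) (hTinv : T * T' = 1) (hTinv' : T' * T = 1)
    (hTnorm : ‖T‖ ≤ r⁻¹) (hT'norm : ‖T'‖ ≤ r⁻¹) :
    ∃ (K : Type u) (_ : NormedAddCommGroup K) (_ : InnerProductSpace ℂ K)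
      (_ : CompleteSpace K) (J J' : K →L[ℂ] K) (V : H →L[ℂ] K),
      J * J' = 1 ∧ J' * J = 1 ∧ memQAscript r J ∧ (∀ x, ‖V x‖ = ‖x‖) ∧
      ∀ n : ℕ, T ^ n = adjoint V ∘L (J ^ n) ∘L V ∧
        T' ^ n = adjoint V ∘L (J' ^ n) ∘L V := by
  have hlt : r ^ 2 < r⁻¹ ^ 2 := by
    have hr : r < r⁻¹ := hr1.trans ((one_lt_inv₀ hr0).2 hr1)
    gcongr
  have hmul : r ^ 2 * r⁻¹ ^ 2 = 1 := by rw [← mul_pow, mul_inv_cancel₀ hr0.ne', one_pow]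
  let u : (H →L[ℂ] H)ˣ := ⟨T, T', hTinv, hTinv'⟩
  obtain ⟨c, p, hp, hgram⟩ := exists_star_mul_self_upperTriangularUnit_eq (u := u) hlt hmul
    ⟨sq_smul_one_le_star_mul_self hr0 hT'norm, star_mul_self_le_sq_smul_one hTnorm⟩
  let w := upperTriangularUnit u (star u⁻¹) c
  let φ := blockOperatorHom ℂ H (Fin 2)
  refine ⟨PiLp 2 fun _ : Fin 2 => H, inferInstance, inferInstance, inferInstance, φ w, φ ↑w⁻¹,
    (summandInclusion ℂ H 0).toContinuousLinearMap, by rw [← map_mul, w.mul_inv, map_one],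
    by rw [← map_mul, w.inv_mul, map_one],
    memQAscript_of_isStarProjection (w.isUnit.map φ) (hp.map φ) ?_,
    (summandInclusion ℂ H 0).norm_map,
    fun n => ⟨(adjoint_comp_blockOperatorHom_pow_comp
      (upperTriangularUnit_apply_zero_of_ne u (star u⁻¹) c) n).symm,
      (adjoint_comp_blockOperatorHom_pow_comp
        (upperTriangularUnit_inv_apply_zero_of_ne u (star u⁻¹) c) n).symm⟩⟩
  rw [← map_star, ← map_mul, hgram, map_add, ← map_one φ, ← map_sub, ← map_smul, ← map_smul]
  norm_cast

/-- If `T ∈ ℚ𝔸_r` and the spectrum of `T*T` is a finite subset of the open interval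
`(r², r⁻²)`, then `T` has a `ℂ[x,x⁻¹]`-dilation to an element of `𝒬𝔸_r`. -/
theorem qa_dilation_finite_spectrum {H : Type u}
    [NormedAddCommGroup H] [InnerProductSpace ℂ H] [CompleteSpace H]
    (r : ℝ) (hr0 : 0 < r) (hr1 : r < 1)
    (T T' : H →L[ℂ] H) (hTinv : T * T' = 1) (hTinv' : T' * T = 1)
    (hTnorm : ‖T‖ ≤ r⁻¹) (hT'norm : ‖T'‖ ≤ r⁻¹)
    (hfin : (spectrum ℂ (adjoint T * T)).Finite)
    (hloc : spectrum ℂ (adjoint T * T) ⊆ Complex.ofReal '' Set.Ioo (r ^ 2) (r⁻¹ ^ 2)) :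
    ∃ (K : Type u) (_ : NormedAddCommGroup K) (_ : InnerProductSpace ℂ K)
      (_ : CompleteSpace K) (J J' : K →L[ℂ] K) (V : H →L[ℂ] K),
      J * J' = 1 ∧ J' * J = 1 ∧ memQAscript r J ∧ (∀ x, ‖V x‖ = ‖x‖) ∧
      ∀ n : ℕ, T ^ n = adjoint V ∘L (J ^ n) ∘L V ∧
        T' ^ n = adjoint V ∘L (J' ^ n) ∘L V := by
  exact qa_dilation_finite_spectrum_general r hr0 hr1 T T' hTinv hTinv' hTnorm hT'norm

end
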